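/- If every variable of a k-CNF formula F occurs in at most 2^k/(e·k) clauses, then F is satisfiable. -/

import Mathlib

namespace LLLaux

open Finset

/-- Points of `Ω` avoiding all events in `S`. -/
noncomputable def good {ι β : Type*} (Ω : Finset β) (A : ι → β → Prop) (S : Finset ι) : Finset β :=
  open Classical in Ω.filter (fun w => ∀ j ∈ S, ¬ A j w)

/-- Points of `Ω` avoiding all events in `S` and in event `i`. -/
noncomputable def badgood {ι β : Type*} (Ω : Finset β) (A : ι → β → Prop) (i : ι) (S : Finset ι) : Finset β :=
  open Classical in Ω.filter (fun w => A i w ∧ ∀ j ∈ S, ¬ A j w)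

lemma good_insert {ι β : Type*} [DecidableEq ι] (Ω : Finset β) (A : ι → β → Prop) (i : ι)
    (S : Finset ι) :
    ((good Ω A (insert i S)).card : ℝ) = (good Ω A S).card - (badgood Ω A i S).card := by
  classical
  have h : (good Ω A S).card = (badgood Ω A i S).card + (good Ω A (insert i S)).card := by
    rw [← Finset.card_filter_add_card_filter_not (s := good Ω A S) (fun w => A i w)]
    congr 2
    · ext w
      simp only [good, badgood, mem_filter]
      tauto
    · ext w
      simp only [good, mem_filter, mem_insert, forall_eq_or_imp]
      tauto
  rw [h]; push_cast; ring

lemma chain {ι β : Type*} [DecidableEq ι] (Ω : Finset β) (A : ι → β → Prop) (x : ℝ)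
    (hx1 : x ≤ 1) (S₂ S₁ : Finset ι)
    (h : ∀ T ⊆ S₁, ∀ j ∈ S₁, j ∉ T →
      ((badgood Ω A j (T ∪ S₂)).card : ℝ) ≤ x * (good Ω A (T ∪ S₂)).card) :
    (1 - x) ^ S₁.card * ((good Ω A S₂).card : ℝ) ≤ (good Ω A (S₁ ∪ S₂)).card := by
  induction S₁ using Finset.induction_on with
  | empty => simp
  | insert j T hj ih =>
    have ih' := ih (fun T' hT' i hi hiT => h T' (hT'.trans (subset_insert _ _)) i
      (mem_insert_of_mem hi) hiT)
    have h1 := h T (subset_insert _ _) j (mem_insert_self _ _) hj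
    rw [insert_union, good_insert, card_insert_of_notMem hj, pow_succ]
    have := mul_le_mul_of_nonneg_left ih' (sub_nonneg.2 hx1)
    linarith

lemma main {ι β : Type*} [DecidableEq ι] (Ω : Finset β) (A : ι → β → Prop) (x p : ℝ) (d : ℕ)
    (F : Finset ι) (Γ : ι → Finset ι) (hx0 : 0 ≤ x) (hx1 : x ≤ 1)
    (hp : p ≤ x * (1 - x) ^ d)
    (hΓ : ∀ i ∈ F, ((Γ i).erase i).card ≤ d)
    (hind : ∀ i ∈ F, ∀ S ⊆ F, Disjoint S (Γ i) →
      ((badgood Ω A i S).card : ℝ) ≤ p * (good Ω A S).card) :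
    ∀ S ⊆ F, ∀ i ∈ F, ((badgood Ω A i S).card : ℝ) ≤ x * (good Ω A S).card := by
  intro S
  induction S using Finset.strongInduction with
  | H S ih =>
    intro hS i hi
    by_cases hiS : i ∈ S
    · have : badgood Ω A i S = ∅ := by
        ext w
        simp only [badgood, mem_filter, notMem_empty, iff_false]
        rintro ⟨_, h1, h2⟩
        exact h2 i hiS h1
      rw [this]; simp; positivity
    have hS12 : (S ∩ Γ i) ∪ (S \ Γ i) = S := by
      ext j; simp only [mem_union, mem_inter, mem_sdiff]; tauto
    have hch := chain Ω A x hx1 (S \ Γ i) (S ∩ Γ i) (by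
      intro T hT j hj hjT
      have hjS := (mem_inter.1 hj)
      have hsub : T ∪ (S \ Γ i) ⊆ S :=
        union_subset (hT.trans inter_subset_left) sdiff_subset
      refine ih _ ⟨hsub, fun hc => ?_⟩ (hsub.trans hS) j (hS hjS.1)
      have := hc hjS.1
      simp only [mem_union, mem_sdiff] at this
      tauto)
    rw [hS12] at hch
    have hcard : (S ∩ Γ i).card ≤ d := by
      refine le_trans (card_le_card ?_) (hΓ i hi)
      intro j hj
      rw [mem_inter] at hj
      refine mem_erase.2 ⟨?_, hj.2⟩
      rintro rfl
      exact hiS hj.1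
    have h1 : ((badgood Ω A i S).card : ℝ) ≤ (badgood Ω A i (S \ Γ i)).card := by
      norm_cast
      apply card_le_card
      intro w
      simp only [badgood, mem_filter, mem_sdiff]
      rintro ⟨a, b, c⟩
      exact ⟨a, b, fun j hj => c j hj.1⟩
    have h2 := hind i hi (S \ Γ i) (sdiff_subset.trans hS) sdiff_disjoint
    have h3 : (1 - x) ^ d ≤ (1 - x) ^ (S ∩ Γ i).card :=
      pow_le_pow_of_le_one (by linarith) (by linarith) hcard
    calc ((badgood Ω A i S).card : ℝ) ≤ p * (good Ω A (S \ Γ i)).card := h1.trans h2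
      _ ≤ x * (1 - x) ^ d * (good Ω A (S \ Γ i)).card := by gcongr
      _ ≤ x * (1 - x) ^ (S ∩ Γ i).card * (good Ω A (S \ Γ i)).card := by gcongr
      _ = x * ((1 - x) ^ (S ∩ Γ i).card * (good Ω A (S \ Γ i)).card) := by ring
      _ ≤ _ := by gcongr

lemma lll {ι β : Type*} [DecidableEq ι] (Ω : Finset β) (A : ι → β → Prop) (x p : ℝ) (d : ℕ)
    (F : Finset ι) (Γ : ι → Finset ι) (hx0 : 0 ≤ x) (hx1 : x < 1) (hΩ : Ω.Nonempty)
    (hp : p ≤ x * (1 - x) ^ d)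
    (hΓ : ∀ i ∈ F, ((Γ i).erase i).card ≤ d)
    (hind : ∀ i ∈ F, ∀ S ⊆ F, Disjoint S (Γ i) →
      ((badgood Ω A i S).card : ℝ) ≤ p * (good Ω A S).card) :
    ∃ w ∈ Ω, ∀ j ∈ F, ¬ A j w := by
  have hm := main Ω A x p d F Γ hx0 hx1.le hp hΓ hind
  have hc := chain Ω A x hx1.le ∅ F (by
    intro T hT j hj _
    rw [union_empty]
    exact hm T hT j hj)
  have h0 : good Ω A (∅ : Finset ι) = Ω := by
    ext w; simp [good]
  rw [h0, union_empty] at hc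
  have hpos : (0 : ℝ) < (1 - x) ^ F.card * (Ω.card : ℝ) := by
    have : (0 : ℝ) < 1 - x := by linarith
    have : (0 : ℝ) < Ω.card := by exact_mod_cast hΩ.card_pos
    positivity
  have h3 : 0 < (good Ω A F).card := by exact_mod_cast hpos.trans_le hc
  obtain ⟨w, hw⟩ := card_pos.1 h3
  simp only [good, mem_filter] at hw
  exact ⟨w, hw.1, hw.2⟩

/-- `w` (the set of true variables) violates the clause `C`. -/
def viol {V : Type*} (C : Finset (V × Bool)) (w : Finset V) : Prop :=
  ∀ q ∈ C, ¬ (q.1 ∈ w ↔ q.2 = true)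

lemma indep {V : Type*} [DecidableEq V] (W : Finset V) (C : Finset (V × Bool))
    (hCW : C.image Prod.fst ⊆ W) (S : Finset (Finset (V × Bool)))
    (hS : ∀ D ∈ S, Disjoint (D.image Prod.fst) (C.image Prod.fst)) :
    (badgood W.powerset viol C S).card * 2 ^ (C.image Prod.fst).card
      ≤ (good W.powerset viol S).card := by
  rw [← card_powerset, ← card_product]
  apply card_le_card_of_injOn (fun z => symmDiff z.1 z.2)
  · rintro ⟨w, U⟩ hz
    simp only [badgood, coe_product, Set.mem_prod, mem_coe, mem_filter, mem_powerset] at hz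
    obtain ⟨⟨hw, hC, hg⟩, hU⟩ := hz
    simp only [good, mem_coe, mem_filter, mem_powerset]
    refine ⟨?_, fun D hD hv => hg D hD fun q hq => ?_⟩
    · intro v hv
      rcases mem_symmDiff.1 hv with h | h
      · exact hw h.1
      · exact hCW (hU h.1)
    · have hq' := hv q hq
      have : q.1 ∉ U := fun h =>
        disjoint_left.1 (hS D hD) (mem_image_of_mem _ hq) (hU h)
      rw [mem_symmDiff] at hq'
      tauto
  · rintro ⟨w, U⟩ hz ⟨w', U'⟩ hz' heq
    simp only [badgood, coe_product, Set.mem_prod, mem_coe, mem_filter, mem_powerset] at hz hz'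
    obtain ⟨⟨-, hC, -⟩, hU⟩ := hz
    obtain ⟨⟨-, hC', -⟩, hU'⟩ := hz'
    have key : ∀ v, (v ∈ w ↔ v ∈ w') ∧ (v ∈ U ↔ v ∈ U') := by
      intro v
      have hv : v ∈ symmDiff w U ↔ v ∈ symmDiff w' U' := by
        simp only at heq
        rw [heq]
      rw [mem_symmDiff, mem_symmDiff] at hv
      by_cases hvC : v ∈ C.image Prod.fst
      · obtain ⟨q, hq, rfl⟩ := mem_image.1 hvC
        have h1 := hC q hq
        have h2 := hC' q hq
        tauto
      · have h1 : v ∉ U := fun h => hvC (hU h)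
        have h2 : v ∉ U' := fun h => hvC (hU' h)
        tauto
    rw [Prod.mk.injEq]
    exact ⟨Finset.ext fun v => (key v).1, Finset.ext fun v => (key v).2⟩

lemma num (N k : ℕ) (hN : 2 ≤ N) (h : (N : ℝ) ≤ 2 ^ k / Real.exp 1) :
    (1 / 2 ^ k : ℝ) ≤ 1 / N * (1 - 1 / N) ^ (N - 1) := by
  obtain ⟨m, rfl⟩ : ∃ m, N = m + 1 := ⟨N - 1, by omega⟩
  have hm : (0 : ℝ) < m := by
    have : 0 < m := by omega
    exact_mod_cast this
  have he := Real.exp_pos 1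
  have h1 : (1 + 1 / (m : ℝ)) ^ m ≤ Real.exp 1 := by
    calc (1 + 1 / (m : ℝ)) ^ m ≤ (Real.exp (1 / m)) ^ m := by
          gcongr
          rw [add_comm]; exact Real.add_one_le_exp _
      _ = Real.exp 1 := by
          rw [← Real.exp_nat_mul]; congr 1; field_simp
  have h2 : (1 - 1 / ((m + 1 : ℕ) : ℝ)) = (1 + 1 / (m : ℝ))⁻¹ := by
    push_cast; field_simp; ring
  rw [Nat.add_sub_cancel, h2, inv_pow]
  have h3 : (Real.exp 1)⁻¹ ≤ ((1 + 1 / (m : ℝ)) ^ m)⁻¹ := by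
    gcongr
  have hNpos : (0 : ℝ) < ((m + 1 : ℕ) : ℝ) := by positivity
  calc (1 / 2 ^ k : ℝ) ≤ 1 / ((m + 1 : ℕ) : ℝ) * (Real.exp 1)⁻¹ := by
        rw [le_div_iff₀ he] at h
        rw [← div_eq_mul_inv, div_div]
        apply one_div_le_one_div_of_le (by positivity) h
    _ ≤ _ := by gcongr

end LLLaux

/-- If every variable of a k-CNF formula occurs in at most 2^k/(e·k) clauses,
the formula is satisfiable.  A clause is a set of k literals (variable, polarity)
over k distinct variables; a literal (x,b) is true under α iff α x = b. -/
theorem stmt6 {V : Type*} [DecidableEq V] (k : ℕ) (hk : 1 ≤ k)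
    (F : Finset (Finset (V × Bool)))
    (hcard : ∀ C ∈ F, C.card = k ∧ (C.image Prod.fst).card = k)
    (hdeg : ∀ x : V, ((F.filter (fun C => x ∈ C.image Prod.fst)).card : ℝ)
      ≤ (2 : ℝ) ^ k / (Real.exp 1 * k)) :
    ∃ α : V → Bool, ∀ C ∈ F, ∃ p ∈ C, α p.1 = p.2 := by
  classical
  rcases F.eq_empty_or_nonempty with rfl | ⟨C₀, hC₀⟩
  · exact ⟨fun _ => true, by simp⟩
  set D : ℕ := ⌊(2 : ℝ) ^ k / (Real.exp 1 * k)⌋₊ with hD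
  have hdeg' : ∀ x : V, (F.filter (fun C => x ∈ C.image Prod.fst)).card ≤ D :=
    fun x => Nat.le_floor (hdeg x)
  have hkpos : (0 : ℝ) < k := by exact_mod_cast hk
  have he := Real.exp_pos 1
  have hDle : (D : ℝ) ≤ (2 : ℝ) ^ k / (Real.exp 1 * k) := Nat.floor_le (by positivity)
  have hD1 : 1 ≤ D := by
    have : (C₀.image Prod.fst).Nonempty := by
      rw [← Finset.card_pos, (hcard C₀ hC₀).2]; omega
    obtain ⟨v, hv⟩ := this
    refine le_trans ?_ (hdeg' v)
    exact Finset.card_pos.2 ⟨C₀, Finset.mem_filter.2 ⟨hC₀, hv⟩⟩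
  have hNle : ((k * D : ℕ) : ℝ) ≤ 2 ^ k / Real.exp 1 := by
    push_cast
    rw [le_div_iff₀ (by positivity)] at hDle ⊢
    linarith
  have hN2 : 2 ≤ k * D := by
    by_contra hlt
    have hk1 : k = 1 := by nlinarith
    have hD1' : D = 1 := by subst hk1; omega
    rw [hk1, hD1', le_div_iff₀ he] at hNle
    have := Real.exp_one_gt_d9
    norm_num at hNle
    linarith
  set W : Finset V := (F.biUnion id).image Prod.fst with hW
  have hN2r : (2 : ℝ) ≤ ((k * D : ℕ) : ℝ) := by exact_mod_cast hN2
  obtain ⟨w, -, hw⟩ := LLLaux.lll W.powerset LLLaux.viol (1 / ((k * D : ℕ) : ℝ)) (1 / 2 ^ k)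
    (k * D - 1) F
    (fun C => (C.image Prod.fst).biUnion
      (fun v => F.filter (fun C => v ∈ C.image Prod.fst)))
    (by positivity) (by rw [div_lt_one (by linarith)]; linarith)
    ⟨∅, by simp⟩ (LLLaux.num _ _ hN2 hNle)
    (by
      intro C hC
      have hmem : C ∈ (C.image Prod.fst).biUnion
          (fun v => F.filter (fun C => v ∈ C.image Prod.fst)) := by
        have : (C.image Prod.fst).Nonempty := by
          rw [← Finset.card_pos, (hcard C hC).2]; omega
        obtain ⟨v, hv⟩ := this
        exact Finset.mem_biUnion.2 ⟨v, hv, Finset.mem_filter.2 ⟨hC, hv⟩⟩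
      rw [Finset.card_erase_of_mem hmem]
      apply Nat.sub_le_sub_right
      have := Finset.card_biUnion_le_card_mul (C.image Prod.fst)
        (fun v => F.filter (fun C => v ∈ C.image Prod.fst)) D (fun v _ => hdeg' v)
      rwa [(hcard C hC).2] at this)
    (by
      intro C hC S hSF hdisj
      have h := LLLaux.indep W C
        (Finset.image_subset_image (Finset.subset_biUnion_of_mem id hC)) S (by
          intro E hE
          rw [Finset.disjoint_left]
          intro v hvE hvC
          exact Finset.disjoint_left.1 hdisj hE
            (Finset.mem_biUnion.2 ⟨v, hvC, Finset.mem_filter.2 ⟨hSF hE, hvE⟩⟩))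
      rw [(hcard C hC).2] at h
      rw [one_div, inv_mul_eq_div, le_div_iff₀ (by positivity)]
      exact_mod_cast h)
  refine ⟨fun v => decide (v ∈ w), fun C hC => ?_⟩
  have := hw C hC
  simp only [LLLaux.viol, not_forall, not_not] at this
  obtain ⟨q, hq, hiff⟩ := this
  refine ⟨q, hq, ?_⟩
  by_cases h : q.1 ∈ w
  · simp [h, hiff.1 h]
  · have : q.2 = false := by
      rw [← Bool.not_eq_true]; exact fun h' => h (hiff.2 h')
    simp [h, this]
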